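/- Let k ≥ 0 be an integer and let G be a simple graph of order n ≥ 2k+7. If e(G) ≥ C(n−k−2, 2) + C(k+3, 2), then G is weakly pancyclic with girth 3, i.e. G contains a triangle and a cycle of every length ℓ with 3 ≤ ℓ ≤ c(G), where c(G) is the circumference of G. -/

import Mathlib

open SimpleGraph

/-- `G` contains a cycle of length `l`. -/
def HasCycleLen {V : Type} (G : SimpleGraph V) (l : ℕ) : Prop :=
  ∃ (v : V) (c : G.Walk v v), c.IsCycle ∧ c.length = l

/-- The circumference of `G`: the length of a longest cycle. -/
noncomputable def circumference {V : Type} (G : SimpleGraph V) : ℕ :=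
  sSup {l | HasCycleLen G l}

/-- `G` is weakly pancyclic with girth 3: it contains a cycle of every length `l`
with `3 ≤ l ≤ c(G)`. -/
def WeaklyPancyclic3 {V : Type} (G : SimpleGraph V) : Prop :=
  HasCycleLen G 3 ∧ ∀ l : ℕ, 3 ≤ l → l ≤ circumference G → HasCycleLen G l

/-- The number of edges of `G`. -/
noncomputable def edgeCount {V : Type} (G : SimpleGraph V) : ℕ :=
  Nat.card G.edgeSet

/-- The degree of `v` in `G`. -/
noncomputable def degCount {V : Type} (G : SimpleGraph V) (v : V) : ℕ :=
  Nat.card (G.neighborSet v)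

/-- The spectral radius of `G`: the largest eigenvalue of the adjacency matrix. -/
noncomputable def specRad {V : Type} [Finite V] (G : SimpleGraph V) : ℝ :=
  letI := Fintype.ofFinite V
  letI := Classical.decEq V
  letI := Classical.decRel G.Adj
  sSup (spectrum ℝ (G.adjMatrix ℝ))

/-- The signless Laplacian spectral radius of `G`: the largest eigenvalue of `D(G) + A(G)`. -/
noncomputable def qSpecRad {V : Type} [Finite V] (G : SimpleGraph V) : ℝ :=
  letI := Fintype.ofFinite V
  letI := Classical.decEq V
  letI := Classical.decRel G.Adj
  sSup (spectrum ℝ (Matrix.diagonal (fun v => (degCount G v : ℝ)) + G.adjMatrix ℝ))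

/-- `L_{n,k} = K_1 ∨ (K_{n-k-1} + K_k)`: vertex `0` is the common vertex of a clique on
the `n - k` vertices `{0, …, n-k-1}` and a clique on the `k+1` vertices `{0} ∪ {n-k, …, n-1}`. -/
def Lgraph (n k : ℕ) : SimpleGraph (Fin n) :=
  SimpleGraph.fromRel (fun u v =>
    u.val = 0 ∨ v.val = 0 ∨ (u.val < n - k ∧ v.val < n - k) ∨
      (n - k ≤ u.val ∧ n - k ≤ v.val))

/-- `Γ_{n,t} = K_2 ∨ (K_{n-2-t} + t·K_1)`: vertices `0,1` are joined to everything,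
vertices `2, …, n-t-1` form a clique, and vertices `n-t, …, n-1` are independent. -/
def GammaGraph (n t : ℕ) : SimpleGraph (Fin n) :=
  SimpleGraph.fromRel (fun u v =>
    u.val < 2 ∨ v.val < 2 ∨ (u.val < n - t ∧ v.val < n - t))

/-- `F` is a member of the family `F_{n,k}`: there is a clique `K` on `n - k` vertices
such that each connected component of `F - K` is a clique all of whose vertices are
adjacent to one single common vertex of `K` and to no other vertex of `K`. -/
def MemF (n k : ℕ) (F : SimpleGraph (Fin n)) : Prop :=
  ∃ K : Finset (Fin n), K.card = n - k ∧ F.IsClique (↑K : Set (Fin n)) ∧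
    (∀ u v : ({x : Fin n | x ∉ K} : Set (Fin n)),
      (F.induce {x : Fin n | x ∉ K}).Reachable u v → (u = v ∨ F.Adj u.1 v.1)) ∧
    (∀ u : ({x : Fin n | x ∉ K} : Set (Fin n)), ∃! w : Fin n, w ∈ K ∧ F.Adj u.1 w) ∧
    (∀ u v : ({x : Fin n | x ∉ K} : Set (Fin n)),
      (F.induce {x : Fin n | x ∉ K}).Reachable u v →
        ∀ w ∈ K, F.Adj u.1 w → F.Adj v.1 w)

/-- `G` is a subgraph of `H` (up to relabelling): there is an injective graph
homomorphism from `G` to `H`. -/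
def IsSubgraphOf {n : ℕ} (G H : SimpleGraph (Fin n)) : Prop :=
  ∃ f : G →g H, Function.Injective f

/-!
The only consequence of the edge bound that matters is `n² < 4e`. Under this hypothesis all cycle
lengths up to the circumference occur, by induction on `n`: deleting a vertex of degree less than
`n / 2` preserves `n² < 4e`, so it suffices to produce the length `l`, or such a vertex whose
deletion leaves a cycle of length at least `l`. Let `C` be a longest cycle.

* If `C` misses some vertex, then some vertex outside `C` has degree less than `n / 2`. Otherwise
  let `P` be a maximal path outside `C`. As a vertex outside `C` has at most `|C| / 2` neighbours on
  `C`, Ore's argument turns `P` into a cycle, whence `|P| ≤ |C|`. One end of `P` has a neighbour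
  `x` on `C`; by maximality of `C` the other end has no neighbours close to `x`, except possibly `x`
  itself, and no two consecutive neighbours on `C`, which makes its degree too small.
* If `C` is spanning, averaging gives two consecutive vertices of `C` with degree sum exceeding `n`,
  and Ore's argument gives a cycle `C'` through all vertices except one, `w`. Either `w` has degree
  less than `n / 2`, or `w` and `C'` contain cycles of all lengths from `3` to `n`.

The triangle comes from Mantel's theorem.
-/

section Enumerations

open Finset

variable {V : Type*} {G : SimpleGraph V} {u v u' v' : V} {s t : Finset V} {f : ℕ → V} {m : ℕ}

/-- `PathOn G u v s`: some path of `G` from `u` to `v` has vertex set `s`. -/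
def PathOn (G : SimpleGraph V) (u v : V) (s : Finset V) : Prop :=
  ∃ p : G.Walk u v, p.IsPath ∧ ∀ x, x ∈ p.support ↔ x ∈ s

/-- `f 0, …, f m` are the successive vertices of a path of length `m` in `G`; the values of `f`
beyond `m` are irrelevant. -/
structure IsPathEnum (G : SimpleGraph V) (m : ℕ) (f : ℕ → V) : Prop where
  adj : ∀ i < m, G.Adj (f i) (f (i + 1))
  injOn : Set.InjOn f (range (m + 1))

/-- `f` runs periodically around a cycle of `G` with vertex set `s`. The infinite index set turns
rotations of the cycle into shifts of `f`. An edge, traversed back and forth, counts as a cycle on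
two vertices. -/
structure IsCyclicEnum (G : SimpleGraph V) (s : Finset V) (f : ℕ → V) : Prop where
  mem : ∀ i, f i ∈ s
  adj : ∀ i, G.Adj (f i) (f (i + 1))
  eq_iff : ∀ {i j}, f i = f j ↔ i ≡ j [MOD #s]

namespace PathOn

theorem singleton (v : V) : PathOn G v v {v} :=
  ⟨Walk.nil, by simp⟩

theorem reverse (p : PathOn G u v s) : PathOn G v u s := by
  obtain ⟨q, hq, hqs⟩ := p
  exact ⟨q.reverse, hq.reverse, by simpa using hqs⟩

theorem left_mem (p : PathOn G u v s) : u ∈ s := by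
  obtain ⟨q, -, hqs⟩ := p
  exact (hqs u).1 q.start_mem_support

theorem right_mem (p : PathOn G u v s) : v ∈ s :=
  p.reverse.left_mem

theorem append [DecidableEq V] (p : PathOn G u v s) (h : G.Adj v u') (q : PathOn G u' v' t)
    (hst : Disjoint s t) : PathOn G u v' (s ∪ t) := by
  obtain ⟨p, hp, hps⟩ := p
  obtain ⟨q, hq, hqt⟩ := q
  refine ⟨p.append (Walk.cons h q), ?_, by simp [Walk.support_append, hps, hqt]⟩
  rw [Walk.isPath_def, Walk.support_append, Walk.support_cons, List.tail_cons, List.nodup_append']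
  refine ⟨hp.support_nodup, hq.support_nodup, fun x hxp hxq => ?_⟩
  exact Finset.disjoint_left.1 hst ((hps x).1 hxp) ((hqt x).1 hxq)

theorem exists_isPathEnum [DecidableEq V] (p : PathOn G u v s) :
    ∃ m f, IsPathEnum G m f ∧ f 0 = u ∧ f m = v ∧ (range (m + 1)).image f = s := by
  obtain ⟨q, hq, hqs⟩ := p
  refine ⟨q.length, q.getVert, ⟨fun i hi => q.adj_getVert_succ hi, ?_⟩, q.getVert_zero,
    q.getVert_length, ?_⟩
  · exact hq.getVert_injOn.mono fun i hi => by simpa [Nat.lt_succ_iff] using hi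
  · ext x
    simp [← hqs, Walk.mem_support_iff_exists_getVert, and_comm]

theorem exists_isCyclicEnum (p : PathOn G u v s) (hvu : G.Adj v u) :
    ∃ f, IsCyclicEnum G s f := by
  classical
  obtain ⟨m, f, hf, rfl, rfl, rfl⟩ := p.exists_isPathEnum
  have hmem (i : ℕ) : i % (m + 1) ∈ range (m + 1) := mem_range.2 (Nat.mod_lt _ m.succ_pos)
  refine ⟨fun i => f (i % (m + 1)), fun i => mem_image_of_mem f (hmem i), fun i => ?_, ?_⟩
  · rcases (Nat.lt_succ_iff.1 (mem_range.1 (hmem i))).eq_or_lt with hi | hi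
    · have hsucc : (i + 1) % (m + 1) = 0 := by
        rw [← Nat.mod_add_mod, hi, Nat.mod_self]
      simpa only [hsucc, hi] using hvu
    · have hsucc : (i + 1) % (m + 1) = i % (m + 1) + 1 := by
        rw [← Nat.mod_add_mod, Nat.mod_eq_of_lt (by omega)]
      simpa only [hsucc] using hf.adj _ hi
  · intro i j
    rw [card_image_of_injOn hf.injOn, card_range]
    exact hf.injOn.eq_iff (mem_coe.2 (hmem i)) (mem_coe.2 (hmem j))

theorem exists_neighbors_subset (hs : s.Nonempty) :
    ∃ u v, ∃ t ⊆ s, PathOn G u v t ∧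
      (∀ w ∈ s, G.Adj u w → w ∈ t) ∧ ∀ w ∈ s, G.Adj v w → w ∈ t := by
  classical
  obtain ⟨x, hx⟩ := hs
  obtain ⟨t, ht, hmax⟩ := (s.powerset.filter fun t => ∃ u v, PathOn G u v t).exists_maximal
    ⟨{x}, by simpa using ⟨hx, x, x, .singleton x⟩⟩
  simp only [mem_filter, mem_powerset] at ht hmax
  obtain ⟨hts, u, v, p⟩ := ht
  have hclosed {a b w : V} (q : PathOn G a b t) (hw : w ∈ s) (hbw : G.Adj b w) : w ∈ t := by
    by_contra hwt
    refine hwt (hmax ⟨union_subset hts (singleton_subset_iff.2 hw), a, w,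
      q.append hbw (.singleton w) (by simpa using hwt)⟩ subset_union_left (by simp))
  exact ⟨u, v, t, hts, p, fun w => hclosed p.reverse, fun w => hclosed p⟩

end PathOn

namespace IsPathEnum

theorem pathOn_image_Icc [DecidableEq V] (hf : IsPathEnum G m f) {a b : ℕ} (hab : a ≤ b)
    (hb : b ≤ m) : PathOn G (f a) (f b) ((Icc a b).image f) := by
  induction b, hab using Nat.le_induction with
  | base => simpa using PathOn.singleton (f a)
  | succ b hab ih =>
    have hnotMem : f (b + 1) ∉ (Icc a b).image f := by
      simp only [mem_image, mem_Icc, not_exists, not_and]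
      intro i hi hfi
      have := hf.injOn (by simp; omega) (by simp; omega) hfi
      omega
    have := (ih (by omega)).append (hf.adj b hb) (.singleton _) (by simpa using hnotMem)
    rwa [union_comm, ← insert_eq, ← image_insert, insert_Icc_right_eq_Icc_add_one (by omega)]
      at this

/-- The cycle is `f i, f (i - 1), …, f 0, f j, f (j + 1), …, f m`. -/
theorem exists_isCyclicEnum_of_crossing [DecidableEq V] (hf : IsPathEnum G m f) {i j : ℕ}
    (hij : i < j) (hjm : j ≤ m) (h0 : G.Adj (f 0) (f j)) (hm : G.Adj (f m) (f i)) :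
    ∃ g, IsCyclicEnum G ((Icc 0 i ∪ Icc j m).image f) g := by
  have hdisj : Disjoint ((Icc 0 i).image f) ((Icc j m).image f) := by
    simp only [Finset.disjoint_left, mem_image, mem_Icc, not_exists, not_and]
    rintro _ ⟨a, ha, rfl⟩ b hb hba
    have := hf.injOn (by simp; omega) (by simp; omega) hba
    omega
  rw [image_union]
  exact ((hf.pathOn_image_Icc i.zero_le (by omega)).reverse.append h0
    (hf.pathOn_image_Icc hjm le_rfl) hdisj).exists_isCyclicEnum hm

end IsPathEnum

namespace IsCyclicEnum

theorem shift (h : IsCyclicEnum G s f) (a : ℕ) : IsCyclicEnum G s (fun i => f (i + a)) where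
  mem _ := h.mem _
  adj i := by simpa [Nat.add_right_comm] using h.adj (i + a)
  eq_iff := h.eq_iff.trans ⟨Nat.ModEq.add_right_cancel' a, Nat.ModEq.add_right a⟩

theorem apply_add_card (h : IsCyclicEnum G s f) (i : ℕ) : f (i + #s) = f i :=
  h.eq_iff.2 (by simp [Nat.ModEq])

theorem one_lt_card (h : IsCyclicEnum G s f) : 1 < #s :=
  Finset.one_lt_card.2 ⟨f 0, h.mem 0, f 1, h.mem 1, (h.adj 0).ne⟩

theorem isPathEnum (h : IsCyclicEnum G s f) (hm : m < #s) : IsPathEnum G m f where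
  adj i _ := h.adj i
  injOn i hi j hj hij := by
    simp only [coe_range, Set.mem_Iio] at hi hj
    exact (h.eq_iff.1 hij).eq_of_lt_of_lt (by omega) (by omega)

theorem injOn (h : IsCyclicEnum G s f) : Set.InjOn f (range #s) := fun i hi j hj hij =>
  (h.eq_iff.1 hij).eq_of_lt_of_lt (by simpa using hi) (by simpa using hj)

theorem image_range [DecidableEq V] (h : IsCyclicEnum G s f) : (range #s).image f = s :=
  eq_of_subset_of_card_le (image_subset_iff.2 fun i _ => h.mem i)
    (by rw [card_image_of_injOn h.injOn, card_range])

theorem image_range_erase [DecidableEq V] (h : IsCyclicEnum G s f) {j : ℕ} (hj : j < #s) :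
    ((range #s).erase j).image f = s.erase (f j) := by
  rw [← sdiff_singleton_eq_erase, image_sdiff_of_injOn h.injOn (by simpa using hj),
    image_singleton, h.image_range, sdiff_singleton_eq_erase]

theorem exists_apply_eq (h : IsCyclicEnum G s f) (hv : v ∈ s) : ∃ i, f i = v := by
  classical
  rw [← h.image_range, mem_image] at hv
  exact hv.imp fun _ => And.right

theorem sum_range_shift {M : Type*} [AddCommMonoid M] (h : IsCyclicEnum G s f) (F : V → M)
    (a : ℕ) : ∑ i ∈ range #s, F (f (i + a)) = ∑ v ∈ s, F v := by
  classical
  have hshift := h.shift a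
  rw [← sum_image (f := F) hshift.injOn, hshift.image_range]

theorem pathOn_arc (h : IsCyclicEnum G s f) (i : ℕ) {k : ℕ} (hk : k < #s) :
    ∃ t ⊆ s, #t = k + 1 ∧ PathOn G (f i) (f (i + k)) t := by
  classical
  have hf := (h.shift i).isPathEnum hk
  refine ⟨(Icc 0 k).image fun j => f (j + i), image_subset_iff.2 fun j _ => h.mem _, ?_, ?_⟩
  · rw [card_image_of_injOn (hf.injOn.mono fun j hj => by simpa [Nat.lt_succ_iff] using hj)]
    simp
  · simpa [add_comm] using hf.pathOn_image_Icc k.zero_le le_rfl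

end IsCyclicEnum

end Enumerations

section DegreeInto

open Finset

variable {V : Type*} {G : SimpleGraph V} [DecidableRel G.Adj] {u v : V} {s t : Finset V}
  {f : ℕ → V} {m : ℕ}

/-- The number of neighbours of `v` in the vertex set `s`. -/
def degOn (G : SimpleGraph V) [DecidableRel G.Adj] (s : Finset V) (v : V) : ℕ :=
  #{w ∈ s | G.Adj v w}

theorem exists_adj_of_degOn_pos (h : 0 < degOn G s v) : ∃ w ∈ s, G.Adj v w := by
  obtain ⟨w, hw⟩ := Finset.card_pos.1 h
  exact ⟨w, mem_filter.1 hw⟩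

theorem degOn_lt_card (hv : v ∈ s) : degOn G s v < #s :=
  card_lt_card (filter_ssubset.2 ⟨v, hv, G.loopless.irrefl v⟩)

theorem degOn_le_degOn (h : ∀ w ∈ s, G.Adj v w → w ∈ t) : degOn G s v ≤ degOn G t v :=
  card_le_card fun w hw => by
    rw [mem_filter] at hw ⊢
    exact ⟨h w hw.1 hw.2, hw.2⟩

theorem degOn_erase_self [DecidableEq V] : degOn G (s.erase v) v = degOn G s v := by
  rw [degOn, filter_erase, erase_eq_of_notMem (by simp), degOn]

theorem degOn_univ [Fintype V] : degOn G univ v = G.degree v := by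
  rw [degOn, ← G.card_neighborFinset_eq_degree, G.neighborFinset_eq_filter]

theorem degOn_add_degOn_compl [Fintype V] [DecidableEq V] :
    degOn G s v + degOn G sᶜ v = G.degree v := by
  rw [← degOn_univ, degOn, degOn, degOn, ← card_union_of_disjoint
    (disjoint_filter_filter disjoint_compl_right), ← filter_union, union_compl]

theorem IsPathEnum.sum_range_adj [DecidableEq V] (hf : IsPathEnum G m f) (v : V) :
    (∑ i ∈ range (m + 1), if G.Adj v (f i) then 1 else 0) =
      degOn G ((range (m + 1)).image f) v := by
  rw [degOn, card_filter, sum_image hf.injOn]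

theorem IsCyclicEnum.card_filter_range_adj (h : IsCyclicEnum G s f) (v : V) (a : ℕ) :
    #{i ∈ range #s | G.Adj v (f (i + a))} = degOn G s v := by
  rw [card_filter, h.sum_range_shift (fun w => if G.Adj v w then 1 else 0), degOn, card_filter]

/-- Ore's argument: by pigeonhole the path has an edge `xy`, with `x` on the side of `u`, such that
`u` is adjacent to `y` and `v` to `x`. -/
theorem PathOn.exists_isCyclicEnum_of_card_le (p : PathOn G u v t)
    (h : #t ≤ degOn G t u + degOn G t v) : ∃ g, IsCyclicEnum G t g := by
  classical
  obtain ⟨m, f, hf, rfl, rfl, rfl⟩ := p.exists_isPathEnum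
  have hfirst : #{i ∈ range m | G.Adj (f 0) (f (i + 1))} =
      degOn G ((range (m + 1)).image f) (f 0) := by
    rw [← hf.sum_range_adj, sum_range_succ', card_filter, if_neg (G.loopless.irrefl _), add_zero]
  have hlast : #{i ∈ range m | G.Adj (f m) (f i)} =
      degOn G ((range (m + 1)).image f) (f m) := by
    rw [← hf.sum_range_adj, sum_range_succ, card_filter, if_neg (G.loopless.irrefl _), add_zero]
  rw [card_image_of_injOn hf.injOn, card_range] at h
  rw [← hfirst, ← hlast] at h
  obtain ⟨i, hi⟩ := inter_nonempty_of_card_lt_card_add_card (filter_subset _ (range m))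
    (filter_subset _ (range m)) (by rw [card_range]; exact h)
  simp only [mem_inter, mem_filter, mem_range] at hi
  have hcover : Icc 0 i ∪ Icc (i + 1) m = range (m + 1) := by
    ext j
    simp only [mem_union, mem_Icc, mem_range]
    omega
  simpa only [hcover] using
    hf.exists_isCyclicEnum_of_crossing i.lt_succ_self hi.1.1 hi.1.2 hi.2.2

namespace IsCyclicEnum

theorem exists_card_lt_degOn_add_degOn_succ (h : IsCyclicEnum G s f)
    (hs : #s ^ 2 < 2 * ∑ v ∈ s, degOn G s v) :
    ∃ i, #s < degOn G s (f i) + degOn G s (f (i + 1)) := by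
  have hsum : ∑ i ∈ range #s, (degOn G s (f i) + degOn G s (f (i + 1))) =
      2 * ∑ v ∈ s, degOn G s v := by
    rw [sum_add_distrib, h.sum_range_shift (degOn G s) 1, two_mul]
    congr 1
    exact h.sum_range_shift (degOn G s) 0
  obtain ⟨i, -, hi⟩ := exists_lt_of_sum_lt (s := range #s) (f := fun _ => #s)
    (by rwa [hsum, sum_const, card_range, smul_eq_mul, ← sq])
  exact ⟨i, hi⟩

theorem exists_isCyclicEnum_erase [DecidableEq V] (h : IsCyclicEnum G s f) {i : ℕ}
    (hi : #s < degOn G s (f i) + degOn G s (f (i + 1))) :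
    ∃ w ∈ s, ∃ g, IsCyclicEnum G (s.erase w) g := by
  set g : ℕ → V := fun j => f (j + (i + 1))
  have hg : IsCyclicEnum G s g := h.shift (i + 1)
  have hcard := h.one_lt_card
  have hg0 : g 0 = f (i + 1) := by simp [g]
  have hglast : g (#s - 1) = f i := by
    rw [← h.apply_add_card i]
    exact congrArg f (by omega)
  rw [← hg0, ← hglast, ← hg.card_filter_range_adj _ 0, ← hg.card_filter_range_adj _ 2] at hi
  obtain ⟨j, hj⟩ := inter_nonempty_of_card_lt_card_add_card (filter_subset _ (range #s))
    (filter_subset _ (range #s)) ((card_range _).trans_lt hi)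
  simp only [mem_inter, mem_filter, mem_range, add_zero] at hj
  obtain ⟨⟨hjs, hlast⟩, -, hfirst⟩ := hj
  have hj1 : j ≠ #s - 1 := fun hj => hlast.ne (hj ▸ rfl)
  have hj2 : j + 2 ≠ #s := fun hj => hfirst.ne (by
    rw [hj, ← hg.apply_add_card 0, zero_add])
  have hcover : Icc 0 j ∪ Icc (j + 2) (#s - 1) = (range #s).erase (j + 1) := by
    ext x
    simp only [mem_union, mem_Icc, mem_erase, mem_range]
    omega
  have := (hg.isPathEnum (show #s - 1 < #s by omega)).exists_isCyclicEnum_of_crossing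
    (show j < j + 2 by omega) (by omega) hfirst hlast
  rw [hcover, hg.image_range_erase (by omega)] at this
  exact ⟨g (j + 1), hg.mem _, this⟩

end IsCyclicEnum

end DegreeInto

section CycleLengths

open Finset

variable {V : Type} {G : SimpleGraph V} {u v : V} {s t : Finset V} {f : ℕ → V} {k l : ℕ}

theorem PathOn.hasCycleLen (p : PathOn G u v s) (hvu : G.Adj v u) (hs : 3 ≤ #s) :
    HasCycleLen G #s := by
  classical
  obtain ⟨q, hq, hqs⟩ := p
  obtain rfl : q.support.toFinset = s := by
    ext x
    simp [hqs]
  have hcard : #q.support.toFinset = q.length + 1 := by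
    rw [List.toFinset_card_of_nodup hq.support_nodup, Walk.length_support]
  refine ⟨v, Walk.cons hvu q, Walk.isCycle_iff_isPath_tail_and_le_length.2 ⟨?_, ?_⟩, ?_⟩
  · simpa using hq
  · simpa [hcard] using hs
  · simp [hcard]

namespace HasCycleLen

theorem exists_isCyclicEnum (h : HasCycleLen G l) : ∃ s f, #s = l ∧ IsCyclicEnum G s f := by
  classical
  obtain ⟨v, c, hc, rfl⟩ := h
  cases c with
  | nil => exact absurd hc Walk.not_isCycle_nil
  | cons hadj q =>
    have hq := ((Walk.cons_isCycle_iff _ _).1 hc).1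
    obtain ⟨f, hf⟩ := PathOn.exists_isCyclicEnum
      ⟨q, hq, fun x => (List.mem_toFinset (a := x)).symm⟩ hadj
    exact ⟨_, f, by simp [List.toFinset_card_of_nodup hq.support_nodup], hf⟩

theorem map {W : Type} {H : SimpleGraph W} (h : HasCycleLen G l) (φ : G →g H)
    (hφ : Function.Injective φ) : HasCycleLen H l := by
  obtain ⟨v, c, hc, rfl⟩ := h
  exact ⟨φ v, c.map φ, hc.map hφ, c.length_map φ⟩

end HasCycleLen

theorem bddAbove_setOf_hasCycleLen [Finite V] : BddAbove {l | HasCycleLen G l} := by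
  have := Fintype.ofFinite V
  refine ⟨Fintype.card V, fun m hm => ?_⟩
  obtain ⟨s, -, rfl, -⟩ := HasCycleLen.exists_isCyclicEnum hm
  exact s.card_le_univ

theorem HasCycleLen.le_circumference [Finite V] (h : HasCycleLen G l) : l ≤ circumference G :=
  le_csSup bddAbove_setOf_hasCycleLen h

theorem hasCycleLen_circumference [Finite V] (h : 0 < circumference G) :
    HasCycleLen G (circumference G) := by
  refine Nat.sSup_mem (Set.nonempty_iff_ne_empty.2 fun hempty => h.ne' ?_)
    bddAbove_setOf_hasCycleLen
  rw [circumference, hempty, csSup_empty, bot_eq_zero]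

namespace IsCyclicEnum

theorem hasCycleLen (h : IsCyclicEnum G s f) (hs : 3 ≤ #s) : HasCycleLen G #s := by
  obtain ⟨t, hts, hcard, p⟩ := h.pathOn_arc 0 (show #s - 1 < #s by omega)
  obtain rfl : t = s := eq_of_subset_of_card_le hts (by omega)
  refine p.hasCycleLen ?_ hs
  rw [← h.apply_add_card 0]
  convert h.adj (0 + (#t - 1)) using 2
  omega

theorem hasCycleLen_induce (h : IsCyclicEnum G s f) (hs : 3 ≤ #s) {A : Set V}
    (hA : ∀ v ∈ s, v ∈ A) : HasCycleLen (G.induce A) #s := by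
  classical
  have hcard : #(s.subtype (· ∈ A)) = #s := by
    rw [card_subtype, filter_true_of_mem hA]
  have hg : IsCyclicEnum (G.induce A) (s.subtype (· ∈ A)) fun i => ⟨f i, hA _ (h.mem i)⟩ :=
    { mem := fun i => by simpa using h.mem i
      adj := h.adj
      eq_iff := by simp [hcard, h.eq_iff] }
  exact hcard ▸ hg.hasCycleLen (hcard ▸ hs)

theorem card_le_circumference_induce [Finite V] (h : IsCyclicEnum G s f) (hs : 3 ≤ #s)
    (hvs : v ∉ s) : #s ≤ circumference (G.induce {v}ᶜ) :=
  (h.hasCycleLen_induce hs fun _ hw => Set.mem_compl_singleton_iff.2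
    (ne_of_mem_of_not_mem hw hvs)).le_circumference

theorem hasCycleLen_of_ear (h : IsCyclicEnum G s f) (p : PathOn G u v t) (hts : Disjoint t s)
    {i : ℕ} (hk : k < #s) (hv : G.Adj v (f i)) (hu : G.Adj (f (i + k)) u)
    (hlen : 3 ≤ #t + k + 1) : HasCycleLen G (#t + k + 1) := by
  classical
  obtain ⟨r, hrs, hcard, q⟩ := h.pathOn_arc i hk
  have hdisj := hts.mono_right hrs
  have hunion : #(t ∪ r) = #t + k + 1 := by
    rw [card_union_of_disjoint hdisj, hcard, add_assoc]
  exact hunion ▸ (p.append hv q hdisj).hasCycleLen hu (hunion ▸ hlen)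

theorem not_adj_succ_of_adj (h : IsCyclicEnum G s f) (hmax : ∀ l, HasCycleLen G l → l ≤ #s)
    (hvs : v ∉ s) {i : ℕ} (hi : G.Adj v (f i)) : ¬ G.Adj v (f (i + 1)) := by
  intro hsucc
  have hcard := h.one_lt_card
  have hwrap : f (i + 1 + (#s - 1)) = f i := by
    rw [← h.apply_add_card i]
    exact congrArg f (by omega)
  have := hmax _ (h.hasCycleLen_of_ear (.singleton v) (disjoint_singleton_left.2 hvs)
    (show #s - 1 < #s by omega) hsucc (hwrap ▸ hi.symm) (by rw [card_singleton]; omega))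
  rw [card_singleton] at this
  omega

theorem card_lt_of_adj (h : IsCyclicEnum G s f) (hmax : ∀ l, HasCycleLen G l → l ≤ #s)
    (p : PathOn G u v t) (hts : Disjoint t s) (ht : 2 ≤ #t) (hu : G.Adj u (f 0)) {i : ℕ}
    (hi : 0 < i) (his : i ≤ #s) (hv : G.Adj v (f i)) : #t < i := by
  have hwrap : f (i + (#s - i)) = f 0 := by
    rw [← h.apply_add_card 0]
    exact congrArg f (by omega)
  have := hmax _ (h.hasCycleLen_of_ear p hts (show #s - i < #s by omega) hv
    (hwrap ▸ hu.symm) (by omega))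
  omega

variable [DecidableRel G.Adj]

/-- By pigeonhole, two neighbours of `v` lie at distance `l - 2` along the cycle. -/
theorem hasCycleLen_of_card_lt_two_mul_degOn (h : IsCyclicEnum G s f) (hvs : v ∉ s)
    (hv : #s < 2 * degOn G s v) (hl : 3 ≤ l) (hls : l ≤ #s + 1) : HasCycleLen G l := by
  obtain ⟨i, hi⟩ := inter_nonempty_of_card_lt_card_add_card
    (filter_subset (fun i => G.Adj v (f (i + 0))) (range #s))
    (filter_subset (fun i => G.Adj v (f (i + (l - 2)))) (range #s))
    (by rwa [h.card_filter_range_adj, h.card_filter_range_adj, card_range, ← two_mul])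
  simp only [mem_inter, mem_filter, add_zero] at hi
  have hlen : #{v} + (l - 2) + 1 = l := by rw [card_singleton]; omega
  exact hlen ▸ h.hasCycleLen_of_ear (.singleton v) (disjoint_singleton_left.2 hvs)
    (by omega) hi.1.2 hi.2.2.symm (by omega)

theorem two_mul_degOn_le_card (h : IsCyclicEnum G s f) (hs : 3 ≤ #s)
    (hmax : ∀ l, HasCycleLen G l → l ≤ #s) (hvs : v ∉ s) : 2 * degOn G s v ≤ #s := by
  by_contra! hv
  have := hmax _ (h.hasCycleLen_of_card_lt_two_mul_degOn hvs hv (by omega) le_rfl)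
  omega

/-- The neighbours of `v` on the cycle, their predecessors and `1, …, #t - 1` occupy distinct
positions. -/
theorem two_mul_degOn_add_card_le (h : IsCyclicEnum G s f)
    (hmax : ∀ l, HasCycleLen G l → l ≤ #s) (p : PathOn G u v t) (hts : Disjoint t s)
    (hcard : #t ≤ #s) (hu : G.Adj u (f 0)) : 2 * degOn G s v + #t ≤ #s + 1 := by
  have hvs : v ∉ s := Finset.disjoint_left.1 hts p.right_mem
  set B : Finset ℕ := {i ∈ range #s | G.Adj v (f (i + 0))}
  set B' : Finset ℕ := {i ∈ range #s | G.Adj v (f (i + 1))}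
  have hBB' : Disjoint B B' := disjoint_filter.2 fun _ _ =>
    h.not_adj_succ_of_adj hmax hvs
  have hI : Disjoint (B ∪ B') (Icc 1 (#t - 1)) := by
    simp only [Finset.disjoint_left, mem_union, B, B', mem_filter, mem_range, mem_Icc]
    rintro i (⟨his, hvi⟩ | ⟨his, hvi⟩) hit
    · have := h.card_lt_of_adj hmax p hts (by omega) hu (by omega) his.le hvi
      omega
    · have := h.card_lt_of_adj hmax p hts (by omega) hu i.succ_pos his hvi
      omega
  have hsub : B ∪ B' ∪ Icc 1 (#t - 1) ⊆ range #s :=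
    union_subset (union_subset (filter_subset _ _) (filter_subset _ _)) fun i hi => by
      rw [mem_Icc] at hi
      rw [mem_range]
      omega
  have hcount := card_le_card hsub
  rw [card_union_of_disjoint hI, card_union_of_disjoint hBB', h.card_filter_range_adj,
    h.card_filter_range_adj, Nat.card_Icc, card_range] at hcount
  omega

theorem exists_notMem_two_mul_degree_lt [Fintype V] (h : IsCyclicEnum G s f) (hs : 3 ≤ #s)
    (hmax : ∀ l, HasCycleLen G l → l ≤ #s) (hne : s ≠ univ) :
    ∃ v ∉ s, 2 * G.degree v < Fintype.card V := by
  classical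
  by_contra! hdeg
  obtain ⟨u, v, t, hts, p, hu, hv⟩ := PathOn.exists_neighbors_subset (G := G)
    (nonempty_iff_ne_empty.2 ((compl_eq_empty_iff s).not.2 hne))
  have hcardV : #s + #sᶜ = Fintype.card V := card_add_card_compl s
  have hbound {w : V} (hwt : w ∈ t) (hw : ∀ x ∈ sᶜ, G.Adj w x → x ∈ t) :
      2 * degOn G s w ≤ #s ∧ degOn G t w < #t ∧
        Fintype.card V ≤ 2 * (degOn G s w + degOn G t w) := by
    have hws : w ∉ s := mem_compl.1 (hts hwt)
    have := hdeg w hws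
    rw [← degOn_add_degOn_compl (s := s)] at this
    have := degOn_le_degOn hw
    exact ⟨h.two_mul_degOn_le_card hs hmax hws, degOn_lt_card hwt, by omega⟩
  obtain ⟨husle, hutlt, hucard⟩ := hbound p.left_mem hu
  obtain ⟨hvsle, hvtlt, hvcard⟩ := hbound p.right_mem hv
  have htle := card_le_card hts
  have htcard : #t ≤ #s := by
    have hends : #t ≤ degOn G t u + degOn G t v := by omega
    obtain ⟨g, hg⟩ := p.exists_isCyclicEnum_of_card_le hends
    by_contra! hlt
    exact hlt.not_ge (hmax _ (hg.hasCycleLen (by omega)))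
  have hus : 0 < degOn G s u := by omega
  obtain ⟨x, hx, hux⟩ := exists_adj_of_degOn_pos hus
  obtain ⟨a, rfl⟩ := h.exists_apply_eq hx
  have := (h.shift a).two_mul_degOn_add_card_le hmax p
    (disjoint_compl_left.mono_left hts) htcard (by simpa using hux)
  omega

end IsCyclicEnum

theorem hasCycleLen_three [Fintype V] [DecidableRel G.Adj]
    (h : Fintype.card V ^ 2 < 4 * #G.edgeFinset) : HasCycleLen G 3 := by
  rw [HasCycleLen, ← is3Clique_iff_exists_cycle_length_three]
  by_contra! hfree
  have mantel : 4 * #G.edgeFinset ≤ Fintype.card V ^ 2 := by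
    have hturan := CliqueFree.card_edgeFinset_le (r := 2) hfree
    rcases Nat.mod_two_eq_zero_or_one (Fintype.card V) with hn | hn <;>
      norm_num [hn] at hturan <;> omega
  omega

theorem sq_card_compl_singleton_lt [Fintype V] [DecidableEq V] [DecidableRel G.Adj]
    (h : Fintype.card V ^ 2 < 4 * #G.edgeFinset) (hv : 2 * G.degree v < Fintype.card V) :
    Fintype.card ({v}ᶜ : Set V) ^ 2 < 4 * #(G.induce {v}ᶜ).edgeFinset := by
  obtain ⟨n, hn⟩ := Nat.exists_eq_add_one.2 (Fintype.card_pos_iff.2 ⟨v⟩)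
  have hcard : Fintype.card ({v}ᶜ : Set V) = n := by
    rw [Fintype.card_compl_set, Set.card_singleton, hn, Nat.add_sub_cancel]
  have hedge := G.degree_le_card_edgeFinset v
  rw [card_edgeFinset_induce_compl_singleton, card_edgeFinset_deleteIncidenceSet, hcard]
  rw [hn] at h hv
  zify [hedge]
  nlinarith

theorem IsCyclicEnum.hasCycleLen_or_exists_le_circumference_induce [Fintype V] [DecidableRel G.Adj]
    (hf : IsCyclicEnum G univ f) (h : Fintype.card V ^ 2 < 4 * #G.edgeFinset) (hl : 3 ≤ l)
    (hlV : l ≤ Fintype.card V) :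
    HasCycleLen G l ∨
      ∃ v, 2 * G.degree v < Fintype.card V ∧ l ≤ circumference (G.induce {v}ᶜ) := by
  classical
  have hsum : #(univ : Finset V) ^ 2 < 2 * ∑ v, degOn G univ v := by
    simp only [degOn_univ, G.sum_degrees_eq_twice_card_edges, card_univ]
    omega
  obtain ⟨i, hi⟩ := hf.exists_card_lt_degOn_add_degOn_succ hsum
  obtain ⟨w, -, g, hg⟩ := hf.exists_isCyclicEnum_erase hi
  have hcard : #(univ.erase w) + 1 = Fintype.card V := card_erase_add_one (mem_univ w)
  by_cases hw : 2 * G.degree w < Fintype.card V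
  · rcases hlV.eq_or_lt with rfl | hlt
    · exact .inl (hf.hasCycleLen hl)
    · exact .inr ⟨w, hw, le_trans (by omega)
        (hg.card_le_circumference_induce (by omega) (notMem_erase w _))⟩
  · refine .inl (hg.hasCycleLen_of_card_lt_two_mul_degOn (notMem_erase w _) ?_ hl (by omega))
    rw [degOn_erase_self, degOn_univ]
    omega

theorem hasCycleLen_or_exists_le_circumference_induce [Fintype V] [DecidableRel G.Adj]
    (h : Fintype.card V ^ 2 < 4 * #G.edgeFinset) (hl : 3 ≤ l) (hlc : l ≤ circumference G) :
    HasCycleLen G l ∨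
      ∃ v, 2 * G.degree v < Fintype.card V ∧ l ≤ circumference (G.induce {v}ᶜ) := by
  obtain ⟨s, f, hs, hf⟩ :=
    (hasCycleLen_circumference (G := G) (by omega)).exists_isCyclicEnum
  rw [← hs] at hlc
  by_cases hspan : s = univ
  · subst hspan
    exact hf.hasCycleLen_or_exists_le_circumference_induce h hl hlc
  · obtain ⟨v, hvs, hv⟩ := hf.exists_notMem_two_mul_degree_lt (by omega)
      (fun _ hm => hs ▸ hm.le_circumference) hspan
    exact .inr ⟨v, hv, hlc.trans (hf.card_le_circumference_induce (by omega) hvs)⟩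

theorem hasCycleLen_of_le_circumference [Fintype V] [DecidableRel G.Adj]
    (h : Fintype.card V ^ 2 < 4 * #G.edgeFinset) (hl : 3 ≤ l) (hlc : l ≤ circumference G) :
    HasCycleLen G l := by
  classical
  induction hn : Fintype.card V using Nat.strong_induction_on generalizing V with | _ n ih
  subst hn
  obtain hG | ⟨v, hv, hlv⟩ := hasCycleLen_or_exists_le_circumference_induce h hl hlc
  · exact hG
  · have hlt : Fintype.card ({v}ᶜ : Set V) < Fintype.card V :=
      Fintype.card_subtype_lt (x := v) (by simp)
    exact (ih _ hlt (sq_card_compl_singleton_lt h hv) hlv rfl).map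
      (Embedding.induce _).toHom Subtype.val_injective

end CycleLengths

theorem sq_lt_four_mul_choose_add_choose {k n : ℕ} (hn : 2 * k + 7 ≤ n) :
    n ^ 2 < 4 * ((n - k - 2).choose 2 + (k + 3).choose 2) := by
  obtain ⟨d, rfl⟩ := Nat.exists_eq_add_of_le hn
  rw [show 2 * k + 7 + d - k - 2 = k + d + 4 + 1 by omega]
  have h₁ := Nat.add_one_mul_choose_eq (k + d + 4) 1
  have h₂ := Nat.add_one_mul_choose_eq (k + 2) 1
  simp only [Nat.choose_one_right] at h₁ h₂
  nlinarith

theorem weakly_pancyclic_of_many_edges'_general {V : Type} [Finite V] (G : SimpleGraph V)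
    (h : Nat.card V ^ 2 < 4 * edgeCount G) : WeaklyPancyclic3 G := by
  classical
  have := Fintype.ofFinite V
  rw [edgeCount, Nat.card_eq_fintype_card, Nat.card_eq_fintype_card, ← edgeFinset_card] at h
  exact ⟨hasCycleLen_three h, fun _ => hasCycleLen_of_le_circumference h⟩

/-- Weak pancyclicity part of Theorem 1.4. -/
theorem weakly_pancyclic_of_many_edges' (k n : ℕ) (G : SimpleGraph (Fin n))
    (hn : 2 * k + 7 ≤ n)
    (he : (n - k - 2).choose 2 + (k + 3).choose 2 ≤ edgeCount G) :
    WeaklyPancyclic3 G := by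
  refine weakly_pancyclic_of_many_edges'_general G ?_
  rw [Nat.card_fin]
  exact (sq_lt_four_mul_choose_add_choose hn).trans_le (Nat.mul_le_mul_left 4 he)
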